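/- Consider the CHSH scenario with two binary ±1 observables per party and the CHSH quantity β_CHSH(p) = ⟨A₁B₁⟩ + ⟨A₁B₂⟩ + ⟨A₂B₁⟩ − ⟨A₂B₂⟩. For every bipartite no-signaling box p in which Bob's observable B₁ is deterministic (Bob's marginal output distribution at y = 1 is a point mass), β_CHSH(p) ≤ 2; moreover, this bound is attained by a no-signaling box with deterministic B₁. Consequently, since the maximal no-signaling value of β_CHSH is 4, the relevance of B₁ for the CHSH inequality is w_CHSH = 4 − 2 = 2. -/

import Mathlib

/-!
In a no-signaling box the means `⟨A_x⟩` and `⟨B_y⟩` are well defined, and positivity of the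
probabilities says exactly that `0 ≤ ⟨(1 + s A_x) (1 + t B_y)⟩` for all signs `s`, `t`. If
`⟨B₁⟩ = c` is a sign, the case `t = -c` forces `⟨A_x B₁⟩ = c ⟨A_x⟩`, so that the CHSH quantity is
`(c ⟨A₁⟩ + ⟨A₁B₂⟩) + (c ⟨A₂⟩ - ⟨A₂B₂⟩)`. By positivity of `⟨(1 - c A₁) (1 + c B₂)⟩` and
`⟨(1 - c A₂) (1 - c B₂)⟩` the two brackets are at most `1 + c ⟨B₂⟩` and `1 - c ⟨B₂⟩`. Without
determinism, only `|⟨A_x B_y⟩| ≤ 1` remains, and the Popescu–Rohrlich box reaches `4`.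
-/

open Finset

/-- The sign `±1` associated with a binary output. -/
def sgn (b : Bool) : ℝ := if b then 1 else -1

/-- A bipartite no-signaling box with binary outputs. -/
def IsNSBox {n m : ℕ} (p : Bool → Bool → Fin n → Fin m → ℝ) : Prop :=
  (∀ a b x y, 0 ≤ p a b x y) ∧
  (∀ x y, ∑ a, ∑ b, p a b x y = 1) ∧
  (∀ a x y y', ∑ b, p a b x y = ∑ b, p a b x y') ∧
  (∀ b y x x', ∑ a, p a b x y = ∑ a, p a b x' y)

/-- The correlator `⟨A_x B_y⟩` of a bipartite box with binary `±1` outputs. -/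
def corr {n m : ℕ} (p : Bool → Bool → Fin n → Fin m → ℝ)
    (x : Fin n) (y : Fin m) : ℝ :=
  ∑ a, ∑ b, sgn a * sgn b * p a b x y

/-- Bob's observable `B₁` (input `y = 1`, i.e. `0 : Fin m`) is deterministic. -/
def DetB1 {n m : ℕ} [NeZero m] (p : Bool → Bool → Fin n → Fin m → ℝ) : Prop :=
  ∃ b0 : Bool, ∀ x b, (∑ a, p a b x 0) = if b = b0 then 1 else 0

/-- The CHSH quantity `⟨A₁B₁⟩ + ⟨A₁B₂⟩ + ⟨A₂B₁⟩ − ⟨A₂B₂⟩`. -/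
def chsh (p : Bool → Bool → Fin 2 → Fin 2 → ℝ) : ℝ :=
  corr p 0 0 + corr p 0 1 + corr p 1 0 - corr p 1 1

/-- The CHSH quantity of a box with any numbers of inputs, built from Alice's inputs `x₁`, `x₂` and
Bob's inputs `y₁`, `y₂`; the minus sign is carried by `x₂` and `y₂`. -/
def chshAt {n m : ℕ} (p : Bool → Bool → Fin n → Fin m → ℝ) (x₁ x₂ : Fin n) (y₁ y₂ : Fin m) : ℝ :=
  corr p x₁ y₁ + corr p x₁ y₂ + corr p x₂ y₁ - corr p x₂ y₂

/-- The mean `⟨A_x⟩` of Alice's output. Bob's input is an argument because the mean is independent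
of it only for no-signaling boxes. -/
def aliceMean {n m : ℕ} (p : Bool → Bool → Fin n → Fin m → ℝ) (x : Fin n) (y : Fin m) : ℝ :=
  ∑ a, ∑ b, sgn a * p a b x y

/-- The mean `⟨B_y⟩` of Bob's output. Alice's input is an argument because the mean is independent
of it only for no-signaling boxes. -/
def bobMean {n m : ℕ} (p : Bool → Bool → Fin n → Fin m → ℝ) (x : Fin n) (y : Fin m) : ℝ :=
  ∑ b, ∑ a, sgn b * p a b x y

/-- The local deterministic box in which Alice answers `f x` and Bob answers `g y`. -/
def localDetBox {n m : ℕ} (f : Fin n → Bool) (g : Fin m → Bool) :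
    Bool → Bool → Fin n → Fin m → ℝ :=
  fun a b x y => if a = f x ∧ b = g y then 1 else 0

/-- The box with uniformly random outputs that agree if `c x y` holds and differ otherwise. The
Popescu–Rohrlich box is the case where `c` fails at exactly one pair of inputs. -/
noncomputable def agreementBox {n m : ℕ} (c : Fin n → Fin m → Bool) :
    Bool → Bool → Fin n → Fin m → ℝ :=
  fun a b x y => if (a == b) = c x y then 1 / 2 else 0

theorem sgn_not (b : Bool) : sgn (!b) = -sgn b := by
  cases b <;> simp [sgn]

theorem sgn_mul_self (b : Bool) : sgn b * sgn b = 1 := by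
  cases b <;> simp [sgn]

theorem one_add_sgn_mul_sgn_nonneg (s a : Bool) : 0 ≤ 1 + sgn s * sgn a := by
  cases s <;> cases a <;> norm_num [sgn]

section Box

variable {n m : ℕ} {p : Bool → Bool → Fin n → Fin m → ℝ}

namespace IsNSBox

theorem aliceMean_eq (hp : IsNSBox p) (x : Fin n) (y y' : Fin m) :
    aliceMean p x y = aliceMean p x y' := by
  simp only [aliceMean, ← mul_sum, hp.2.2.1 _ x y y']

theorem bobMean_eq (hp : IsNSBox p) (x x' : Fin n) (y : Fin m) :
    bobMean p x y = bobMean p x' y := by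
  simp only [bobMean, ← mul_sum, hp.2.2.2 _ y x x']

theorem one_add_means_add_corr_nonneg (hp : IsNSBox p) (s t : Bool) (x : Fin n) (y : Fin m) :
    0 ≤ 1 + sgn s * aliceMean p x y + sgn t * bobMean p x y + sgn s * sgn t * corr p x y :=
  calc
    0 ≤ ∑ a, ∑ b, (1 + sgn s * sgn a) * (1 + sgn t * sgn b) * p a b x y :=
      sum_nonneg fun a _ => sum_nonneg fun b _ =>
        mul_nonneg (mul_nonneg (one_add_sgn_mul_sgn_nonneg s a) (one_add_sgn_mul_sgn_nonneg t b))
          (hp.1 a b x y)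
    _ = ∑ a, ∑ b, p a b x y + sgn s * aliceMean p x y + sgn t * bobMean p x y
        + sgn s * sgn t * corr p x y := by
      simp only [aliceMean, bobMean, corr, Fintype.sum_bool]
      ring
    _ = _ := by rw [hp.2.1 x y]

theorem abs_corr_le_one (hp : IsNSBox p) (x : Fin n) (y : Fin m) : |corr p x y| ≤ 1 := by
  have h := fun s t => hp.one_add_means_add_corr_nonneg s t x y
  simp only [Bool.forall_bool, sgn, Bool.false_eq_true, if_true, if_false] at h
  exact abs_le.mpr ⟨by linarith, by linarith⟩

theorem corr_eq_of_bobMean_eq_sgn (hp : IsNSBox p) {x : Fin n} {y : Fin m} {b₀ : Bool}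
    (hB : bobMean p x y = sgn b₀) : corr p x y = sgn b₀ * aliceMean p x y := by
  have h := fun s => hp.one_add_means_add_corr_nonneg s (!b₀) x y
  simp only [hB, sgn_not, neg_mul, sgn_mul_self, Bool.forall_bool] at h
  cases b₀ <;> simp only [sgn, Bool.false_eq_true, if_true, if_false] at h ⊢ <;> linarith

theorem chshAt_le_four (hp : IsNSBox p) (x x' : Fin n) (y y' : Fin m) :
    chshAt p x x' y y' ≤ 4 := by
  have h := fun x y => abs_le.mp (hp.abs_corr_le_one x y)
  unfold chshAt
  linarith [(h x y).2, (h x y').2, (h x' y).2, (h x' y').1]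

theorem chshAt_le_two_of_bobMean_eq_sgn (hp : IsNSBox p) {x : Fin n} {y : Fin m} {b₀ : Bool}
    (hB : bobMean p x y = sgn b₀) (x' : Fin n) (y' : Fin m) : chshAt p x x' y y' ≤ 2 := by
  have upper : corr p x y + corr p x y' ≤ 1 + sgn b₀ * bobMean p x y' := by
    have h := hp.one_add_means_add_corr_nonneg (!b₀) b₀ x y'
    rw [sgn_not, neg_mul, neg_mul, sgn_mul_self] at h
    rw [hp.corr_eq_of_bobMean_eq_sgn hB, hp.aliceMean_eq x y y']
    linarith
  have lower : corr p x' y - corr p x' y' ≤ 1 - sgn b₀ * bobMean p x y' := by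
    have h := hp.one_add_means_add_corr_nonneg (!b₀) (!b₀) x' y'
    rw [sgn_not, neg_mul, neg_mul, neg_mul_neg, sgn_mul_self] at h
    rw [hp.corr_eq_of_bobMean_eq_sgn ((hp.bobMean_eq x' x y).trans hB), hp.aliceMean_eq x' y y',
      hp.bobMean_eq x x' y']
    linarith
  unfold chshAt
  linarith

end IsNSBox

theorem DetB1.exists_bobMean_eq_sgn [NeZero m] (hp : DetB1 p) :
    ∃ b₀, ∀ x, bobMean p x 0 = sgn b₀ := by
  obtain ⟨b₀, hb₀⟩ := hp
  exact ⟨b₀, fun x => by simp only [bobMean, ← mul_sum, hb₀, mul_ite, mul_one, mul_zero,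
    sum_ite_eq', mem_univ, if_true]⟩

end Box

section LocalDetBox

variable {n m : ℕ} (f : Fin n → Bool) (g : Fin m → Bool)

theorem isNSBox_localDetBox : IsNSBox (localDetBox f g) := by
  refine ⟨fun a b x y => ?_, fun x y => ?_, fun a x y y' => ?_, fun b y x x' => ?_⟩
  · unfold localDetBox
    positivity
  all_goals simp [localDetBox, ite_and]

theorem detB1_localDetBox [NeZero m] : DetB1 (localDetBox f g) :=
  ⟨g 0, fun x b => by simp [localDetBox, ite_and]⟩

theorem corr_localDetBox (x : Fin n) (y : Fin m) :
    corr (localDetBox f g) x y = sgn (f x) * sgn (g y) := by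
  simp [corr, localDetBox, ite_and]

end LocalDetBox

section AgreementBox

variable {n m : ℕ} (c : Fin n → Fin m → Bool)

theorem sum_bob_agreementBox (a : Bool) (x : Fin n) (y : Fin m) :
    ∑ b, agreementBox c a b x y = 1 / 2 := by
  cases a <;> cases h : c x y <;> simp [agreementBox, h]

theorem sum_alice_agreementBox (b : Bool) (x : Fin n) (y : Fin m) :
    ∑ a, agreementBox c a b x y = 1 / 2 := by
  cases b <;> cases h : c x y <;> simp [agreementBox, h]

theorem isNSBox_agreementBox : IsNSBox (agreementBox c) := by
  refine ⟨fun a b x y => ?_, fun x y => ?_, fun a x y y' => ?_, fun b y x x' => ?_⟩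
  · unfold agreementBox
    positivity
  · simp only [sum_bob_agreementBox, sum_const, card_univ, Fintype.card_bool]
    norm_num
  · simp only [sum_bob_agreementBox]
  · simp only [sum_alice_agreementBox]

theorem corr_agreementBox (x : Fin n) (y : Fin m) : corr (agreementBox c) x y = sgn (c x y) := by
  cases h : c x y <;> norm_num [corr, agreementBox, sgn, h]

end AgreementBox

theorem isGreatest_chshAt_isNSBox {n m : ℕ} {x x' : Fin n} {y y' : Fin m} (hx : x ≠ x')
    (hy : y ≠ y') :
    IsGreatest {v : ℝ | ∃ p : Bool → Bool → Fin n → Fin m → ℝ,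
      IsNSBox p ∧ v = chshAt p x x' y y'} 4 := by
  constructor
  · refine ⟨agreementBox fun i j => !decide (i = x' ∧ j = y'), isNSBox_agreementBox _, ?_⟩
    norm_num [chshAt, corr_agreementBox, sgn, hx, hy]
  · rintro _ ⟨p, hp, rfl⟩
    exact hp.chshAt_le_four x x' y y'

theorem isGreatest_chshAt_detB1 {n m : ℕ} [NeZero m] (x x' : Fin n) (y : Fin m) :
    IsGreatest {v : ℝ | ∃ p : Bool → Bool → Fin n → Fin m → ℝ,
      IsNSBox p ∧ DetB1 p ∧ v = chshAt p x x' 0 y} 2 := by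
  constructor
  · refine ⟨localDetBox (fun _ => true) fun _ => true, isNSBox_localDetBox _ _,
      detB1_localDetBox _ _, ?_⟩
    norm_num [chshAt, corr_localDetBox, sgn]
  · rintro _ ⟨p, hp, hdet, rfl⟩
    obtain ⟨b₀, hB⟩ := hdet.exists_bobMean_eq_sgn
    exact hp.chshAt_le_two_of_bobMean_eq_sgn (hB x) x' y

theorem chsh_relevance_general {n m : ℕ} [NeZero m] {x x' : Fin n} {y : Fin m} (hx : x ≠ x')
    (hy : y ≠ 0) :
    IsGreatest {v : ℝ | ∃ p : Bool → Bool → Fin n → Fin m → ℝ,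
        IsNSBox p ∧ v = chshAt p x x' 0 y} 4 ∧
      IsGreatest {v : ℝ | ∃ p : Bool → Bool → Fin n → Fin m → ℝ,
        IsNSBox p ∧ DetB1 p ∧ v = chshAt p x x' 0 y} 2 :=
  ⟨isGreatest_chshAt_isNSBox hx hy.symm, isGreatest_chshAt_detB1 _ _ _⟩

/-- The maximum of the CHSH quantity over no-signaling boxes in which `B₁` is deterministic
equals `2` (the bound holds and is attained); consequently, the maximal no-signaling value
being `4`, the relevance of `B₁` for the CHSH inequality is `w_CHSH = 4 − 2 = 2`. -/
theorem chsh_relevance :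
    IsGreatest {v : ℝ | ∃ p : Bool → Bool → Fin 2 → Fin 2 → ℝ,
        IsNSBox p ∧ DetB1 p ∧ v = chsh p} 2 ∧
      (4 : ℝ) - 2 = 2 :=
  ⟨(chsh_relevance_general zero_ne_one one_ne_zero).2, by norm_num⟩
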